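/- Sard-type partition lemma (Lemma l3.3). There exist an integer m ≥ 1, pairwise disjoint sets 𝒟′₁, …, 𝒟′_m with 𝒟′ = ⋃_{l=1}^m 𝒟′_l, and numbers ν₁, …, ν_m ∈ (ν, 3ν/2) such that for every l ∈ {1,…,m} and every (z, w) in the closure of 𝒟′_l, zero is a regular value of the function v ↦ F(z, w + v) − ν_l on the closure of O; that is, for every v in the closure of O with F(z, w + v) = ν_l, the derivative of the map v ↦ F(z, w + v) at v is nonzero. -/

import Mathlib

open Set

/-!
The critical set of a smooth function `f` on a `d`-dimensional space is stratified by the order to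
which `f` is flat. Near a point where all derivatives of orders `1, …, d` vanish, `f` is Hölder of
exponent `d + 1` along that stratum by Taylor's formula, so its image has Hausdorff dimension less
than one. A critical point flat to order exactly `k` lies on a regular level set of some `k`-th
partial derivative of `f`, and this level set contains nearby points flat to order `k`; it is
parametrized by a space of dimension `d - 1`, so induction on `d` applies. Hence almost every level
is regular (Sard).

For a family of functions depending continuously on a parameter together with its derivative, the
parameters for which a fixed level is regular on a fixed compact set form an open set. These open
sets, over all levels in an interval, cover the parameter space; shrinking them to closed
neighbourhoods, extracting a finite subcover and making it disjoint gives the partition.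
-/

section RegularValues

open MeasureTheory Module
open scoped ContDiff NNReal Topology

section Flat

variable {V F : Type*} [NormedAddCommGroup V] [NormedSpace ℝ V] [NormedAddCommGroup F]
  [NormedSpace ℝ F]

lemma sub_eq_integral_of_iteratedFDeriv_eq_zero [CompleteSpace F] {f : V → F} {n : ℕ} {x y : V}
    (hf : ∀ z ∈ segment ℝ x y, ContDiffAt ℝ (n + 1) f z)
    (hx : ∀ k ∈ Icc 1 n, iteratedFDeriv ℝ k f x = 0) :
    f y - f x = (n.factorial : ℝ)⁻¹ • ∫ t in (0 : ℝ)..1,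
      (1 - t) ^ n • iteratedFDeriv ℝ (n + 1) f (x + t • (y - x)) fun _ ↦ y - x := by
  have taylor_sum : ∑ k ∈ Finset.range (n + 1),
      (k.factorial : ℝ)⁻¹ • iteratedFDeriv ℝ k f x (fun _ ↦ y - x) = f x := by
    rw [Finset.sum_range_succ', Finset.sum_eq_zero]
    · simp
    · intro k hk
      rw [hx (k + 1) ⟨by omega, by simpa [Nat.succ_le_iff] using hk⟩]
      simp
  have taylor := map_add_eq_sum_add_integral_iteratedFDeriv (f := f) (x := x) (y := y - x) (n := n)
    fun t ht ↦ hf _ (segment_eq_image' ℝ x y ▸ mem_image_of_mem _ ht)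
  rwa [taylor_sum, add_sub_cancel, ← sub_eq_iff_eq_add'] at taylor

lemma norm_sub_le_of_iteratedFDeriv_eq_zero [CompleteSpace F] {f : V → F} {n : ℕ} {C : ℝ} {x y : V}
    (hf : ∀ z ∈ segment ℝ x y, ContDiffAt ℝ (n + 1) f z)
    (hC : ∀ z ∈ segment ℝ x y, ‖iteratedFDeriv ℝ (n + 1) f z‖ ≤ C)
    (hx : ∀ k ∈ Icc 1 n, iteratedFDeriv ℝ k f x = 0) :
    ‖f y - f x‖ ≤ C * ‖y - x‖ ^ (n + 1) := by
  have integrand_le : ∀ t ∈ uIoc (0 : ℝ) 1,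
      ‖(1 - t) ^ n • iteratedFDeriv ℝ (n + 1) f (x + t • (y - x)) (fun _ ↦ y - x)‖ ≤
        C * ‖y - x‖ ^ (n + 1) := by
    intro t ht
    rw [uIoc_of_le zero_le_one] at ht
    have hseg : x + t • (y - x) ∈ segment ℝ x y :=
      segment_eq_image' ℝ x y ▸ mem_image_of_mem _ ⟨ht.1.le, ht.2⟩
    have hD := ContinuousMultilinearMap.le_of_opNorm_le (hC _ hseg) fun _ ↦ y - x
    rw [Fin.prod_const] at hD
    have hpow : ‖(1 - t) ^ n‖ ≤ 1 := by
      rw [norm_pow, Real.norm_of_nonneg (by linarith [ht.2])]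
      exact pow_le_one₀ (by linarith [ht.2]) (by linarith [ht.1])
    rw [norm_smul]
    exact (mul_le_of_le_one_left (norm_nonneg _) hpow).trans hD
  have integral_le := intervalIntegral.norm_integral_le_of_norm_le_const integrand_le
  rw [sub_zero, abs_one, mul_one] at integral_le
  have hfact : ‖(n.factorial : ℝ)⁻¹‖ ≤ 1 := by
    rw [norm_inv, Real.norm_natCast]
    exact inv_le_one_of_one_le₀ (mod_cast n.factorial_pos)
  rw [sub_eq_integral_of_iteratedFDeriv_eq_zero hf hx, norm_smul]
  exact (mul_le_of_le_one_left (norm_nonneg _) hfact).trans integral_le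

/-- The points of `U` at which the derivatives of `f` of orders `1, …, k` all vanish. These sets
stratify the critical set of `f`, which is the case `k = 1`; the value of `f` itself, that is order
zero, is left free. -/
def flatSet (f : V → F) (U : Set V) (k : ℕ) : Set V :=
  {x ∈ U | ∀ j ∈ Icc 1 k, iteratedFDeriv ℝ j f x = 0}

lemma flatSet_anti (f : V → F) (U : Set V) : Antitone (flatSet f U) :=
  fun _ _ hkl _ hx ↦ ⟨hx.1, fun j hj ↦ hx.2 j ⟨hj.1, hj.2.trans hkl⟩⟩

lemma flatSet_one (f : V → F) (U : Set V) : flatSet f U 1 = {x ∈ U | fderiv ℝ f x = 0} := by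
  ext x
  simp [flatSet, ← norm_eq_zero (a := iteratedFDeriv ℝ 1 f x), norm_iteratedFDeriv_one]

lemma flatSet_one_subset_union_iUnion_diff (f : V → F) (U : Set V) (n : ℕ) :
    flatSet f U 1 ⊆ flatSet f U (n + 1) ∪ ⋃ k, flatSet f U (k + 1) \ flatSet f U (k + 2) := by
  induction n with
  | zero => exact subset_union_left
  | succ n ih =>
    refine ih.trans (union_subset (fun x hx ↦ ?_) subset_union_right)
    by_cases hx' : x ∈ flatSet f U (n + 2)
    · exact Or.inl hx'
    · exact Or.inr (mem_iUnion_of_mem n ⟨hx, hx'⟩)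

lemma exists_holderOnWith_flatSet [CompleteSpace F] {f : V → F} {U : Set V} {k : ℕ} (hU : IsOpen U)
    (hf : ContDiffOn ℝ (k + 1) f U) {x : V} (hx : x ∈ U) :
    ∃ C : ℝ≥0, ∃ t ∈ 𝓝[flatSet f U k] x, HolderOnWith C (k + 1) f t := by
  have hfU : ∀ y ∈ U, ContDiffAt ℝ (k + 1) f y := fun y hy ↦ hf.contDiffAt (hU.mem_nhds hy)
  have hcont := (hfU x hx).continuousAt_iteratedFDeriv (k := k + 1) (mod_cast le_rfl)
  obtain ⟨r, hr, hball⟩ := Metric.eventually_nhds_iff_ball.1 <|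
    (hU.eventually_mem hx).and (hcont.nnnorm.eventually_lt_const (lt_add_one _))
  refine ⟨‖iteratedFDeriv ℝ (k + 1) f x‖₊ + 1, flatSet f U k ∩ Metric.ball x r,
    inter_mem_nhdsWithin _ (Metric.ball_mem_nhds x hr), fun y hy z hz ↦ ?_⟩
  have hseg : segment ℝ z y ⊆ Metric.ball x r := (convex_ball x r).segment_subset hz.2 hy.2
  have htaylor := norm_sub_le_of_iteratedFDeriv_eq_zero (fun w hw ↦ hfU w (hball w (hseg hw)).1)
    (fun w hw ↦ NNReal.coe_le_coe.2 (hball w (hseg hw)).2.le) hz.1.2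
  rw [edist_nndist, edist_nndist, nndist_eq_nnnorm, nndist_eq_nnnorm,
    show ((k + 1 : ℝ≥0) : ℝ) = (k + 1 : ℕ) by push_cast; rfl, ENNReal.rpow_natCast]
  exact_mod_cast htaylor

lemma dimH_image_flatSet_le [FiniteDimensional ℝ V] [CompleteSpace F] {f : V → F}
    {U : Set V} {k : ℕ} (hU : IsOpen U) (hf : ContDiffOn ℝ (k + 1) f U) :
    dimH (f '' flatSet f U k) ≤ finrank ℝ V / (k + 1) := by
  have := FiniteDimensional.proper_real V
  calc dimH (f '' flatSet f U k) ≤ dimH (flatSet f U k) / (k + 1 : ℝ≥0) :=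
        dimH_image_le_of_locally_holder_on (by positivity) fun x hx ↦
          exists_holderOnWith_flatSet hU hf hx.1
    _ ≤ dimH (univ : Set V) / (k + 1 : ℝ≥0) := by gcongr; exact subset_univ _
    _ = finrank ℝ V / (k + 1) := by simp [Real.dimH_univ_eq_finrank]

lemma volume_image_flatSet_of_finrank_le [FiniteDimensional ℝ V] {f : V → ℝ} {U : Set V} {k : ℕ}
    (hU : IsOpen U) (hf : ContDiffOn ℝ (k + 1) f U) (hk : finrank ℝ V ≤ k) :
    volume (f '' flatSet f U k) = 0 := by
  have hdim : dimH (f '' flatSet f U k) < (1 : ℝ≥0) := by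
    refine (dimH_image_flatSet_le hU hf).trans_lt ?_
    rw [ENNReal.div_lt_iff (by simp) (by simp), ENNReal.coe_one, one_mul]
    exact_mod_cast Nat.lt_succ_of_le hk
  simpa [hausdorffMeasure_real] using hausdorffMeasure_of_dimH_lt hdim

end Flat

section LevelSet

variable {V W F G : Type*} [NormedAddCommGroup V] [NormedSpace ℝ V] [CompleteSpace V]
  [NormedAddCommGroup W] [NormedSpace ℝ W] [NormedAddCommGroup F] [NormedSpace ℝ F]
  [NormedAddCommGroup G] [NormedSpace ℝ G] {n : ℕ∞ω} {U : Set V} {x : V}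

lemma exists_openPartialHomeomorph_contDiffOn_symm {Φ : V → W} (hn : n ≠ 0) (hU : IsOpen U)
    (hΦ : ContDiffOn ℝ n Φ U) (hx : x ∈ U) {A : V ≃L[ℝ] W}
    (hA : HasFDerivAt Φ (A : V →L[ℝ] W) x) :
    ∃ e : OpenPartialHomeomorph V W, ⇑e = Φ ∧ x ∈ e.source ∧ e.source ⊆ U ∧
      ContDiffOn ℝ n e.symm e.target := by
  have hΦU : ∀ y ∈ U, ContDiffAt ℝ n Φ y := fun y hy ↦ hΦ.contDiffAt (hU.mem_nhds hy)
  have hinv : ∀ᶠ y in 𝓝 x, fderiv ℝ Φ y ∈ range ((↑) : (V ≃L[ℝ] W) → V →L[ℝ] W) :=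
    ((hΦU x hx).continuousAt_fderiv hn).eventually (hA.fderiv ▸ A.nhds)
  obtain ⟨N, hN, hNo, hxN⟩ := eventually_nhds_iff.1 ((hU.eventually_mem hx).and hinv)
  let e := ((hΦU x hx).toOpenPartialHomeomorph Φ hA hn).restrOpen N hNo
  have he : e.source ⊆ N := inter_subset_right
  refine ⟨e, rfl, ⟨(hΦU x hx).mem_toOpenPartialHomeomorph_source hA hn, hxN⟩,
    fun y hy ↦ (hN y (he hy)).1, fun w hw ↦ ContDiffAt.contDiffWithinAt ?_⟩
  obtain ⟨hyU, B, hB⟩ := hN _ (he (e.map_target hw))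
  refine e.contDiffAt_symm (f₀' := B) hw ?_ (hΦU _ hyU)
  exact hB ▸ ((hΦU _ hyU).differentiableAt hn).hasFDerivAt

lemma exists_contDiffOn_ker_levelSet_subset_image {g : V → G} (hn : n ≠ 0) (hU : IsOpen U)
    (hg : ContDiffOn ℝ n g U) (hx : x ∈ U) (hgx : (fderiv ℝ g x).HasRightInverse) :
    ∃ N ∈ 𝓝 x, ∃ (φ : (fderiv ℝ g x).ker → V) (T : Set (fderiv ℝ g x).ker),
      IsOpen T ∧ ContDiffOn ℝ n φ T ∧ MapsTo φ T U ∧ {y ∈ N | g y = g x} ⊆ φ '' T := by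
  set L := fderiv ℝ g x
  let R := hgx.rightInverse
  have hLR : ∀ w, L (R w) = w := hgx.rightInverse_rightInverse
  -- `Φ` is tangent to the identity at `x` and straightens `g`: it satisfies `L ∘ Φ = g - g x`.
  let Φ : V → V := fun y ↦ y + R (g y - g x - L y)
  have hLΦ : ∀ y, L (Φ y) = g y - g x := fun y ↦ by simp [Φ, hLR]
  have hΦ : ContDiffOn ℝ n Φ U := contDiffOn_id.add <| R.contDiff.comp_contDiffOn <|
    (hg.sub contDiffOn_const).sub L.contDiff.contDiffOn
  have hΦx : HasFDerivAt Φ (ContinuousLinearEquiv.refl ℝ V : V →L[ℝ] V) x := by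
    have hgx' : HasFDerivAt g L x :=
      ((hg.contDiffAt (hU.mem_nhds hx)).differentiableAt hn).hasFDerivAt
    refine ((hasFDerivAt_id x).add
      (R.hasFDerivAt.comp x ((hgx'.sub_const (g x)).sub L.hasFDerivAt))).congr_fderiv ?_
    ext w
    simp
  obtain ⟨e, he, hxe, heU, hsymm⟩ :=
    exists_openPartialHomeomorph_contDiffOn_symm hn hU hΦ hx hΦx
  refine ⟨e.source, e.open_source.mem_nhds hxe, fun u ↦ e.symm u, ((↑) : L.ker → V) ⁻¹' e.target,
    e.open_target.preimage continuous_subtype_val,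
    hsymm.comp L.ker.subtypeL.contDiff.contDiffOn fun _ hu ↦ hu,
    fun u hu ↦ heU (e.map_target hu), ?_⟩
  rintro y ⟨hy, hgy⟩
  have hker : e y ∈ L.ker := by simp [he, hLΦ, hgy]
  exact ⟨⟨e y, hker⟩, e.map_source hy, e.left_inv hy⟩

lemma exists_image_criticalSet_levelSet_subset {f : V → F} {g : V → G} (hn : n ≠ 0)
    (hU : IsOpen U) (hf : ContDiffOn ℝ n f U) (hg : ContDiffOn ℝ n g U) (hx : x ∈ U)
    (hgx : (fderiv ℝ g x).HasRightInverse) :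
    ∃ N ∈ 𝓝 x, ∃ (h : (fderiv ℝ g x).ker → F) (T : Set (fderiv ℝ g x).ker),
      IsOpen T ∧ ContDiffOn ℝ n h T ∧
        f '' {y ∈ N | g y = g x ∧ fderiv ℝ f y = 0} ⊆ h '' flatSet h T 1 := by
  obtain ⟨N, hN, φ, T, hT, hφ, hφU, hNφ⟩ :=
    exists_contDiffOn_ker_levelSet_subset_image hn hU hg hx hgx
  refine ⟨N, hN, f ∘ φ, T, hT, hf.comp hφ hφU, ?_⟩
  rintro _ ⟨y, ⟨hyN, hgy, hfy⟩, rfl⟩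
  obtain ⟨u, hu, rfl⟩ := hNφ ⟨hyN, hgy⟩
  have hfu := (hf.contDiffAt (hU.mem_nhds (hφU hu))).differentiableAt hn
  have hφu := (hφ.contDiffAt (hT.mem_nhds hu)).differentiableAt hn
  rw [flatSet_one]
  exact ⟨u, ⟨hu, by rw [fderiv_comp u hfu hφu, hfy, ContinuousLinearMap.zero_comp]⟩, rfl⟩

end LevelSet

section Sard

variable {V : Type*} [NormedAddCommGroup V] [NormedSpace ℝ V] {f : V → ℝ} {U : Set V} {x : V}

lemma exists_contDiffOn_fderiv_ne_zero_of_mem_flatSet_diff {k : ℕ} (hU : IsOpen U)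
    (hf : ContDiffOn ℝ ∞ f U) (hk : 1 ≤ k) (hx : x ∈ flatSet f U k \ flatSet f U (k + 1)) :
    ∃ g : V → ℝ, ContDiffOn ℝ ∞ g U ∧ fderiv ℝ g x ≠ 0 ∧ ∀ y ∈ flatSet f U k, g y = 0 := by
  have hDf : ∀ y ∈ U, ContDiffAt ℝ ∞ (iteratedFDeriv ℝ k f) y := fun y hy ↦
    (hf.contDiffAt (hU.mem_nhds hy)).iteratedFDeriv_right (mod_cast le_top)
  have hne : iteratedFDeriv ℝ (k + 1) f x ≠ 0 := fun h0 ↦ hx.2 ⟨hx.1.1, fun j hj ↦ by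
    rcases hj.2.lt_or_eq with hlt | rfl
    exacts [hx.1.2 j ⟨hj.1, by omega⟩, h0]⟩
  obtain ⟨m, hm⟩ := DFunLike.ne_iff.1 hne
  let ev := ContinuousMultilinearMap.apply ℝ (fun _ : Fin k ↦ V) ℝ (Fin.tail m)
  refine ⟨fun y ↦ ev (iteratedFDeriv ℝ k f y),
    fun y hy ↦ (ev.contDiff.contDiffAt.comp y (hDf y hy)).contDiffWithinAt,
    fun h0 ↦ hm ?_, fun y hy ↦ ?_⟩
  · have hDfx := (hDf x hx.1.1).differentiableAt (by simp)
    have hev : ev.comp (fderiv ℝ (iteratedFDeriv ℝ k f) x) = 0 :=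
      (ev.hasFDerivAt.comp x hDfx.hasFDerivAt).fderiv.symm.trans h0
    rw [iteratedFDeriv_succ_apply_left]
    exact DFunLike.congr_fun hev (m 0)
  · simp [hy.2 k ⟨hk, le_rfl⟩]

lemma exists_image_flatSet_inter_subset [FiniteDimensional ℝ V] {k : ℕ} (hU : IsOpen U)
    (hf : ContDiffOn ℝ ∞ f U) (hk : 1 ≤ k) (hx : x ∈ flatSet f U k \ flatSet f U (k + 1)) :
    ∃ N ∈ 𝓝 x, ∃ W : Submodule ℝ V, finrank ℝ W < finrank ℝ V ∧ ∃ (h : W → ℝ) (T : Set W),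
      IsOpen T ∧ ContDiffOn ℝ ∞ h T ∧ f '' (flatSet f U k ∩ N) ⊆ h '' flatSet h T 1 := by
  have := FiniteDimensional.complete ℝ V
  obtain ⟨g, hg, hgx, hg0⟩ :=
    exists_contDiffOn_fderiv_ne_zero_of_mem_flatSet_diff hU hf hk hx
  have hL : (fderiv ℝ g x).HasRightInverse := .of_surjective_of_finiteDimensional <|
    LinearMap.surjective (f := (fderiv ℝ g x).toLinearMap) (mod_cast hgx)
  obtain ⟨N, hN, h, T, hT, hh, hsub⟩ :=
    exists_image_criticalSet_levelSet_subset (by simp) hU hf hg hx.1.1 hL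
  have hrank : finrank ℝ (fderiv ℝ g x).ker + 1 = finrank ℝ V :=
    Module.Dual.finrank_ker_add_one_of_ne_zero (f := (fderiv ℝ g x).toLinearMap) (mod_cast hgx)
  refine ⟨N, hN, _, by omega, h, T, hT, hh, (image_mono ?_).trans hsub⟩
  rintro y ⟨hy, hyN⟩
  have hy1 : y ∈ flatSet f U 1 := flatSet_anti f U hk hy
  rw [flatSet_one] at hy1
  exact ⟨hyN, (hg0 y hy).trans (hg0 x hx.1).symm, hy1.2⟩

lemma measure_image_null_of_locally_null {Y Z : Type*} [TopologicalSpace Y]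
    [SecondCountableTopology Y] [MeasurableSpace Z] {μ : Measure Z} {f : Y → Z} {s : Set Y}
    (hs : ∀ x ∈ s, ∃ u ∈ 𝓝[s] x, μ (f '' u) = 0) : μ (f '' s) = 0 :=
  measure_null_of_locally_null (μ := OuterMeasure.comap f μ.toOuterMeasure) s hs

theorem volume_image_flatSet_one {V : Type*} [NormedAddCommGroup V] [NormedSpace ℝ V]
    [FiniteDimensional ℝ V] {f : V → ℝ} {U : Set V} (hU : IsOpen U) (hf : ContDiffOn ℝ ∞ f U) :
    volume (f '' flatSet f U 1) = 0 := by
  induction hd : finrank ℝ V using Nat.strong_induction_on generalizing V f U with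
  | _ d ih =>
  have := FiniteDimensional.proper_real V
  have hflat : volume (f '' flatSet f U (d + 1)) = 0 :=
    volume_image_flatSet_of_finrank_le hU (hf.of_le (mod_cast le_top)) (by omega)
  have hstratum : ∀ k, volume (f '' (flatSet f U (k + 1) \ flatSet f U (k + 2))) = 0 := by
    refine fun k ↦ measure_image_null_of_locally_null fun x hx ↦ ?_
    obtain ⟨N, hN, W, hW, h, T, hT, hh, hsub⟩ :=
      exists_image_flatSet_inter_subset hU hf (by omega) hx
    have hnull : volume (h '' flatSet h T 1) = 0 := ih _ (hd ▸ hW) hT hh rfl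
    exact ⟨_, inter_mem_nhdsWithin _ hN,
      measure_mono_null ((image_mono (inter_subset_inter_left _ sdiff_subset)).trans hsub) hnull⟩
  refine measure_mono_null (image_mono (flatSet_one_subset_union_iUnion_diff f U d)) ?_
  rw [image_union, image_iUnion]
  exact measure_union_null hflat (measure_iUnion_null hstratum)

/-- `c` is a regular value of `f` on `C`: no point of `C` at level `c` is critical. A point counts
as critical when `fderiv ℝ f` vanishes there, hence also when `f` is not differentiable there. -/
def IsRegularValueOn (f : V → ℝ) (C : Set V) (c : ℝ) : Prop :=
  ∀ v ∈ C, f v = c → fderiv ℝ f v ≠ 0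

theorem ae_isRegularValueOn [FiniteDimensional ℝ V] (hU : IsOpen U) (hf : ContDiffOn ℝ ∞ f U) :
    ∀ᵐ c, IsRegularValueOn f U c := by
  refine measure_mono_null (fun c hc ↦ ?_) (volume_image_flatSet_one hU hf)
  simp only [IsRegularValueOn, mem_compl_iff, mem_ofPred_eq, not_forall, not_not] at hc
  obtain ⟨v, hv, hfv, hcrit⟩ := hc
  rw [flatSet_one]
  exact ⟨v, ⟨hv, hcrit⟩, hfv⟩

lemma exists_isRegularValueOn_mem_Ioo [FiniteDimensional ℝ V] {a b : ℝ} (hU : IsOpen U)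
    (hf : ContDiffOn ℝ ∞ f U) (hab : a < b) : ∃ c ∈ Ioo a b, IsRegularValueOn f U c :=
  let ⟨c, hc, hac, hcb⟩ := (Measure.dense_of_ae (ae_isRegularValueOn hU hf)).exists_between hab
  ⟨c, ⟨hac, hcb⟩, hc⟩

lemma isOpen_setOf_isRegularValueOn {Y : Type*} [TopologicalSpace Y] {G : Y → V → ℝ} {C : Set V}
    (hC : IsCompact C) (hG : Continuous fun p : Y × V ↦ G p.1 p.2)
    (hDG : Continuous fun p : Y × V ↦ fderiv ℝ (G p.1) p.2) (c : ℝ) :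
    IsOpen {y | IsRegularValueOn (G y) C c} := by
  refine isOpen_iff_mem_nhds.2 fun y hy ↦ hC.eventually_forall_of_forall_eventually fun v hv ↦ ?_
  by_cases hlevel : G y v = c
  · filter_upwards [hDG.continuousAt.eventually_ne (x := (y, v)) (hy v hv hlevel)] with p hp _
    exact hp
  · filter_upwards [hG.continuousAt.eventually_ne (x := (y, v)) hlevel] with p hp hp'
    exact absurd hp' hp

end Sard

lemma exists_finite_partition_closure_subset {Y ι : Type*} [TopologicalSpace Y] [RegularSpace Y]
    [Nonempty ι] {K : Set Y} {U : ι → Set Y} (hK : IsCompact K) (hU : ∀ i, IsOpen (U i))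
    (hKU : K ⊆ ⋃ i, U i) :
    ∃ m : ℕ, 1 ≤ m ∧ ∃ (D : Fin m → Set Y) (i : Fin m → ι),
      (Pairwise fun l l' ↦ Disjoint (D l) (D l')) ∧ ⋃ l, D l = K ∧
        ∀ l, closure (D l) ⊆ U (i l) := by
  have hshrink : ∀ y ∈ K, ∃ (i : ι) (B : Set Y), B ∈ 𝓝 y ∧ closure B ⊆ U i := by
    intro y hy
    obtain ⟨i, hi⟩ := mem_iUnion.1 (hKU hy)
    obtain ⟨B, hB, hBc, hBU⟩ := exists_mem_nhds_isClosed_subset ((hU i).mem_nhds hi)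
    exact ⟨i, B, hB, hBc.closure_eq.symm ▸ hBU⟩
  choose! i B hB hBU using hshrink
  obtain ⟨t, htK, htcover⟩ := hK.elim_nhds_subcover B hB
  -- An empty extra piece keeps the number of pieces positive when `K` is empty.
  let A : Fin (t.card + 1) → Set Y := Fin.cons ∅ fun l ↦ B (t.equivFin.symm l)
  let j : Fin (t.card + 1) → ι := Fin.cons (Classical.arbitrary ι) fun l ↦ i (t.equivFin.symm l)
  have hAj : ∀ l, closure (A l) ⊆ U (j l) :=
    Fin.cases (by simp [A]) fun l ↦ hBU _ (htK _ (t.equivFin.symm l).2)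
  have hKA : K ⊆ ⋃ l, A l := by
    refine htcover.trans (iUnion₂_subset fun y hy ↦ ?_)
    exact subset_iUnion_of_subset (t.equivFin ⟨y, hy⟩).succ (by simp [A])
  refine ⟨t.card + 1, by omega, fun l ↦ K ∩ disjointed A l, j, fun l l' hll' ↦ ?_, ?_, fun l ↦ ?_⟩
  · exact (disjoint_disjointed A hll').mono inter_subset_right inter_subset_right
  · rw [← inter_iUnion, iUnion_disjointed, inter_eq_left.2 hKA]
  · exact (closure_mono (inter_subset_right.trans (disjointed_le A l))).trans (hAj l)

lemma continuous_fderiv_comp_add_coe {X E : Type*} [TopologicalSpace X]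
    [NormedAddCommGroup E] [NormedSpace ℝ E] {F : X → E → ℝ} (E₀ E₁ : Submodule ℝ E)
    (hF : ∀ z, Differentiable ℝ (F z))
    (hDF : Continuous fun p : X × E ↦ fderiv ℝ (F p.1) p.2) :
    Continuous fun p : (X × E₁) × E₀ ↦ fderiv ℝ (fun v : E₀ ↦ F p.1.1 (p.1.2 + v)) p.2 := by
  have hslice : ∀ p : (X × E₁) × E₀, fderiv ℝ (fun v : E₀ ↦ F p.1.1 (p.1.2 + v)) p.2 =
      (fderiv ℝ (F p.1.1) (p.1.2 + p.2)).comp E₀.subtypeL := fun p ↦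
    ((hF p.1.1 _).hasFDerivAt.comp p.2 (E₀.subtypeL.hasFDerivAt.const_add (p.1.2 : E))).fderiv
  simp only [hslice]
  exact (hDF.comp (by fun_prop : Continuous fun p : (X × E₁) × E₀ ↦
    (p.1.1, (p.1.2 + p.2 : E)))).clm_comp continuous_const

theorem stmt4_general {Y V : Type*} [TopologicalSpace Y] [RegularSpace Y] [NormedAddCommGroup V]
    [NormedSpace ℝ V] [FiniteDimensional ℝ V] {C : Set V} (hC : IsCompact C) {K : Set Y}
    (hK : IsCompact K) {a b : ℝ} (hab : a < b) {G : Y → V → ℝ}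
    (hG : Continuous fun p : Y × V ↦ G p.1 p.2) (hGsmooth : ∀ y, ContDiff ℝ ∞ (G y))
    (hDG : Continuous fun p : Y × V ↦ fderiv ℝ (G p.1) p.2) :
    ∃ m : ℕ, 1 ≤ m ∧ ∃ (D : Fin m → Set Y) (c : Fin m → ℝ),
      (Pairwise fun l l' ↦ Disjoint (D l) (D l')) ∧ ⋃ l, D l = K ∧ (∀ l, c l ∈ Ioo a b) ∧
        ∀ l, ∀ y ∈ closure (D l), IsRegularValueOn (G y) C (c l) := by
  have : Nonempty (Ioo a b) := (nonempty_Ioo.2 hab).to_subtype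
  have hcover : K ⊆ ⋃ c : Ioo a b, {y | IsRegularValueOn (G y) C c} := fun y _ ↦ by
    obtain ⟨c, hc, hreg⟩ := exists_isRegularValueOn_mem_Ioo isOpen_univ (hGsmooth y).contDiffOn hab
    exact mem_iUnion.2 ⟨⟨c, hc⟩, fun v _ ↦ hreg v (mem_univ v)⟩
  obtain ⟨m, hm, D, c, hdisj, hD, hcl⟩ := exists_finite_partition_closure_subset hK
    (fun c : Ioo a b ↦ isOpen_setOf_isRegularValueOn hC hG hDG c) hcover
  exact ⟨m, hm, D, fun l ↦ c l, hdisj, hD, fun l ↦ (c l).2, hcl⟩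

end RegularValues

/-- Sard-type partition lemma: the compact set `𝒟′ ⊆ 𝒳 × E₀^⊥` can be partitioned into
finitely many pieces `𝒟′₁, …, 𝒟′_m` with associated levels `ν_l ∈ (ν, 3ν/2)` such that for
every `(z, w)` in the closure of `𝒟′_l`, zero is a regular value of
`v ↦ F(z, w + v) − ν_l` on the closure of `O`. -/
theorem stmt4 {X E : Type*} [MetricSpace X] [CompactSpace X]
    [NormedAddCommGroup E] [InnerProductSpace ℝ E] [FiniteDimensional ℝ E]
    (E₀ : Submodule ℝ E)
    (O : Set E₀) (hObdd : Bornology.IsBounded O) (hOconv : Convex ℝ O) (hOopen : IsOpen O)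
    (D' : Set (X × E₀ᗮ)) (hD'comp : IsCompact D')
    (ν : ℝ) (hν : 0 < ν)
    (F : X → E → ℝ)
    (hFcont : Continuous fun p : X × E => F p.1 p.2)
    (hFsmooth : ∀ z, ContDiff ℝ (⊤ : ℕ∞) (F z))
    (hDcont : Continuous fun p : X × E => fderiv ℝ (F p.1) p.2) :
    ∃ m : ℕ, 1 ≤ m ∧
    ∃ (D : Fin m → Set (X × E₀ᗮ)) (νl : Fin m → ℝ),
      (Pairwise fun l l' => Disjoint (D l) (D l')) ∧
      (⋃ l, D l) = D' ∧
      (∀ l, νl l ∈ Ioo ν (3 * ν / 2)) ∧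
      (∀ l, ∀ zw ∈ closure (D l), ∀ v ∈ closure O,
        F zw.1 ((zw.2 : E) + (v : E)) = νl l →
          fderiv ℝ (fun v' : E₀ => F zw.1 ((zw.2 : E) + (v' : E))) v ≠ 0) :=
  stmt4_general hObdd.isCompact_closure hD'comp (by linarith)
    (hFcont.comp (by fun_prop : Continuous fun p : (X × E₀ᗮ) × E₀ ↦ (p.1.1, (p.1.2 + p.2 : E))))
    (fun zw ↦ (hFsmooth zw.1).comp (contDiff_const.add E₀.subtypeL.contDiff))
    (continuous_fderiv_comp_add_coe E₀ E₀ᗮ (fun z ↦ (hFsmooth z).differentiable (by simp))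
      hDcont)
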